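/- arXiv:1411.3672 — 2 statements merged into one kernel-verified Lean document; each statement's English description precedes it below -/
import Mathlib

section
/- For every positive integer k and every real λ with 0 < λ < 1, the series ∑_{n=0}^∞ (1+2n)²/((4k² − (1+2n)²)·((1+2n)² − λ²)²) converges and equals ((π²·λ/2)·(4k² − λ²)·sec²(πλ/2) + π·(4k² + λ²)·tan(πλ/2)) / (8·λ·(λ² − 4k²)²). -/
open Real

open Filter Topology

/-!
Write `m = 1 + 2n`. In partial fractions with respect to `m²`, the summand
`m² / ((a² - m²)(m² - z²)²)` is a combination of `4z / (m² - z²)`, of its derivative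
`4(m² + z²) / (m² - z²)²` in `z`, and of `4a / (m² - a²)`. The first of these sums to
`π tan (π z / 2)`: this is the Mittag-Leffler expansion of the cotangent at `(z + 1) / 2`, with its
poles paired differently. The convergence is locally uniform, so the second sums to the derivative
`(π² / 2) sec² (π z / 2)`. For `a = 2k` the third sums to `π tan (k π) = 0`.
-/

theorem hasSum_deriv_of_hasSumLocallyUniformlyOn {ι E : Type*} [NormedAddCommGroup E]
    [NormedSpace ℂ E] [CompleteSpace E] {f : ι → ℂ → E} {g : ℂ → E} {s : Set ℂ} {z : ℂ}
    (hfg : HasSumLocallyUniformlyOn f g s) (hs : IsOpen s)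
    (hf : ∀ i, DifferentiableOn ℂ (f i) s) (hz : z ∈ s) :
    HasSum (fun i => deriv (f i) z) (deriv g z) := by
  have hderiv := (hasSumLocallyUniformlyOn_iff_tendstoLocallyUniformlyOn.mp hfg).deriv
    (.of_forall fun t => DifferentiableOn.fun_sum fun i _ => hf i) hs
  refine (hderiv.tendsto_at hz).congr fun t => ?_
  exact deriv_fun_sum fun i _ => (hf i).differentiableAt (hs.mem_nhds hz)

/-- The `n`-th term of the Mittag-Leffler expansion of `π tan (π z / 2)`, in which the poles
`±(2n + 1)` are paired; the counterpart of Mathlib's `cotTerm`. -/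
noncomputable def tanTerm (z : ℂ) (n : ℕ) : ℂ :=
  4 * z / ((1 + 2 * (n : ℂ)) ^ 2 - z ^ 2)

theorem norm_tanTerm_le {z : ℂ} {n : ℕ} {R : ℝ} (hzR : ‖z‖ ≤ R) (hRn : R ≤ n) :
    ‖tanTerm z n‖ ≤ 4 * R * (1 / ((n : ℝ) + 1) ^ 2) := by
  have hR : 0 ≤ R := (norm_nonneg z).trans hzR
  have hden : ((n : ℝ) + 1) ^ 2 ≤ ‖(1 + 2 * (n : ℂ)) ^ 2 - z ^ 2‖ :=
    calc ((n : ℝ) + 1) ^ 2 ≤ (1 + 2 * (n : ℝ)) ^ 2 - (n : ℝ) ^ 2 := by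
          nlinarith [n.cast_nonneg (α := ℝ)]
      _ ≤ (1 + 2 * (n : ℝ)) ^ 2 - ‖z‖ ^ 2 := by gcongr; exact hzR.trans hRn
      _ = ‖(1 + 2 * (n : ℂ)) ^ 2‖ - ‖z ^ 2‖ := by
        have hnorm : ‖1 + 2 * (n : ℂ)‖ = 1 + 2 * (n : ℝ) := by
          exact_mod_cast Complex.norm_natCast (1 + 2 * n)
        rw [norm_pow, norm_pow, hnorm]
      _ ≤ ‖(1 + 2 * (n : ℂ)) ^ 2 - z ^ 2‖ := norm_sub_norm_le _ _
  rw [tanTerm, norm_div, norm_mul, Complex.norm_ofNat, mul_one_div]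
  gcongr

theorem summableLocallyUniformlyOn_tanTerm {s : Set ℂ} (hs : IsOpen s) :
    SummableLocallyUniformlyOn (fun n z => tanTerm z n) s := by
  refine SummableLocallyUniformlyOn.of_locally_bounded_eventually hs fun K _ hK => ?_
  obtain ⟨R, hR⟩ := hK.isBounded.exists_norm_le
  have hsummable : Summable fun n : ℕ => 1 / ((n : ℝ) + 1) ^ 2 := by
    exact_mod_cast (summable_nat_add_iff 1).mpr (Real.summable_one_div_nat_pow.mpr one_lt_two)
  refine ⟨_, hsummable.mul_left (4 * R), ?_⟩
  rw [Nat.cofinite_eq_atTop]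
  filter_upwards [eventually_ge_atTop ⌈R⌉₊] with n hn z hz
  exact norm_tanTerm_le (hR z hz) (Nat.ceil_le.mp hn)

section TangentExpansion

variable {z : ℂ}

theorem odd_sq_sub_sq_ne_zero_of_cos_ne_zero (hz : Complex.cos (π * z / 2) ≠ 0) (n : ℕ) :
    (1 + 2 * (n : ℂ)) ^ 2 - z ^ 2 ≠ 0 := by
  rw [sub_ne_zero, ne_comm, Ne, sq_eq_sq_iff_eq_or_eq_neg]
  rw [Complex.cos_ne_zero_iff] at hz
  rintro (rfl | rfl)
  · exact hz n (by push_cast; ring)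
  · exact hz (-n - 1) (by push_cast; ring)

theorem sin_pi_mul_add_one_div_two (z : ℂ) :
    Complex.sin (π * ((z + 1) / 2)) = Complex.cos (π * z / 2) := by
  rw [← Complex.sin_add_pi_div_two]
  ring_nf

theorem cot_pi_mul_add_one_div_two (z : ℂ) :
    Complex.cot (π * ((z + 1) / 2)) = -Complex.tan (π * z / 2) := by
  rw [Complex.cot, sin_pi_mul_add_one_div_two, Complex.tan_eq_sin_div_cos, ← neg_div,
    ← Complex.cos_add_pi_div_two]
  ring_nf

theorem add_one_div_two_mem_integerComplement (hz : Complex.cos (π * z / 2) ≠ 0) :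
    (z + 1) / 2 ∈ Complex.integerComplement := by
  rintro ⟨n, hn⟩
  rw [← sin_pi_mul_add_one_div_two, ← hn, mul_comm] at hz
  exact hz (Complex.sin_int_mul_pi n)

-- `cotTerm` pairs the poles symmetrically about `0`, `tanTerm` symmetrically about `1 / 2` (in the
-- variable `(z + 1) / 2`), so the two differ by a telescoping term.
theorem tanTerm_eq_sub_cotTerm (hz : Complex.cos (π * z / 2) ≠ 0) (n : ℕ) :
    tanTerm z n = 1 / ((z + 1) / 2 + (n + 1 : ℕ)) - 1 / ((z + 1) / 2 + n)
      - cotTerm ((z + 1) / 2) n := by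
  have hden := odd_sq_sub_sq_ne_zero_of_cos_ne_zero hz n
  rw [sq_sub_sq] at hden
  have hadd : z + 1 + 2 * n ≠ 0 := by convert left_ne_zero_of_mul hden using 1; ring
  have hsub : z + 1 - 2 * (n + 1) ≠ 0 := by
    convert neg_ne_zero.mpr (right_ne_zero_of_mul hden) using 1; ring
  have hden' : (1 + 2 * (n : ℂ)) ^ 2 - z ^ 2 = -((z + 1 + 2 * n) * (z + 1 - 2 * (n + 1))) := by ring
  rw [tanTerm, cotTerm, hden']
  push_cast
  rw [add_comm (1 / _) (1 / ((z + 1) / 2 + (n + 1))), sub_right_comm, sub_add_cancel_left]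
  field_simp
  ring

theorem tendsto_sum_range_tanTerm (hz : Complex.cos (π * z / 2) ≠ 0) :
    Tendsto (fun N => ∑ n ∈ Finset.range N, tanTerm z n) atTop
      (𝓝 (π * Complex.tan (π * z / 2))) := by
  have hcot := tendsto_logDeriv_euler_cot_sub (add_one_div_two_mem_integerComplement hz)
  set w := (z + 1) / 2 with hw
  have hboundary : Tendsto (fun N : ℕ => 1 / (w + N)) atTop (𝓝 0) := by
    simp only [one_div]
    exact tendsto_inv₀_cobounded.comp
      ((tendsto_const_add_cobounded w).comp tendsto_natCast_atTop_cobounded)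
  have hlim := (hboundary.sub_const (1 / w)).sub hcot
  rw [hw, cot_pi_mul_add_one_div_two, ← hw] at hlim
  convert! hlim using 2 with N
  · simp only [tanTerm_eq_sub_cotTerm hz, Finset.sum_sub_distrib, ← hw,
      Finset.sum_range_sub (fun n : ℕ => 1 / (w + n)), Nat.cast_zero, add_zero]
  · ring

theorem isOpen_setOf_cos_pi_mul_div_two_ne_zero :
    IsOpen {z : ℂ | Complex.cos (π * z / 2) ≠ 0} :=
  isOpen_ne_fun (by fun_prop) continuous_const

theorem hasSumLocallyUniformlyOn_tanTerm :
    HasSumLocallyUniformlyOn (fun n z => tanTerm z n) (fun z => π * Complex.tan (π * z / 2))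
      {z | Complex.cos (π * z / 2) ≠ 0} := by
  have hsummable := summableLocallyUniformlyOn_tanTerm isOpen_setOf_cos_pi_mul_div_two_ne_zero
  refine hsummable.hasSumLocallyUniformlyOn.congr_right fun z hz => ?_
  exact tendsto_nhds_unique (hsummable.summable hz).hasSum.tendsto_sum_nat
    (tendsto_sum_range_tanTerm hz)

theorem hasDerivAt_tanTerm (hz : Complex.cos (π * z / 2) ≠ 0) (n : ℕ) :
    HasDerivAt (fun w => tanTerm w n)
      (4 * ((1 + 2 * (n : ℂ)) ^ 2 + z ^ 2) / ((1 + 2 * (n : ℂ)) ^ 2 - z ^ 2) ^ 2) z := by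
  convert! ((hasDerivAt_id' z).const_mul 4).fun_div
    ((hasDerivAt_pow 2 z).const_sub ((1 + 2 * (n : ℂ)) ^ 2))
    (odd_sq_sub_sq_ne_zero_of_cos_ne_zero hz n) using 2
  push_cast
  ring

theorem hasDerivAt_pi_mul_tan_pi_mul_div_two (hz : Complex.cos (π * z / 2) ≠ 0) :
    HasDerivAt (fun w : ℂ => π * Complex.tan (π * w / 2))
      (π ^ 2 / 2 * (1 / Complex.cos (π * z / 2)) ^ 2) z := by
  have hlin : HasDerivAt (fun w : ℂ => π * w / 2) (π * 1 / 2) z :=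
    ((hasDerivAt_id' z).const_mul (π : ℂ)).div_const 2
  convert! ((Complex.hasDerivAt_tan hz).comp z hlin).const_mul (π : ℂ) using 1
  ring

theorem hasSum_odd_sq_add_sq_div_odd_sq_sub_sq_sq (hz : Complex.cos (π * z / 2) ≠ 0) :
    HasSum
      (fun n : ℕ => 4 * ((1 + 2 * (n : ℂ)) ^ 2 + z ^ 2) / ((1 + 2 * (n : ℂ)) ^ 2 - z ^ 2) ^ 2)
      (π ^ 2 / 2 * (1 / Complex.cos (π * z / 2)) ^ 2) := by
  have hderiv := hasSum_deriv_of_hasSumLocallyUniformlyOn hasSumLocallyUniformlyOn_tanTerm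
    isOpen_setOf_cos_pi_mul_div_two_ne_zero
    (fun n w hw => (hasDerivAt_tanTerm hw n).differentiableAt.differentiableWithinAt) hz
  simpa only [(hasDerivAt_tanTerm hz _).deriv, (hasDerivAt_pi_mul_tan_pi_mul_div_two hz).deriv]
    using hderiv

end TangentExpansion

theorem sq_div_mul_sq_partial_fractions {K : Type*} [Field K] [CharZero K] {m a z : K}
    (hz : z ≠ 0) (haz : a ^ 2 - z ^ 2 ≠ 0) (hma : m ^ 2 - a ^ 2 ≠ 0) (hmz : m ^ 2 - z ^ 2 ≠ 0) :
    m ^ 2 / ((a ^ 2 - m ^ 2) * (m ^ 2 - z ^ 2) ^ 2) =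
      1 / (8 * (a ^ 2 - z ^ 2)) * (4 * (m ^ 2 + z ^ 2) / (m ^ 2 - z ^ 2) ^ 2)
        + (a ^ 2 + z ^ 2) / (8 * z * (a ^ 2 - z ^ 2) ^ 2) * (4 * z / (m ^ 2 - z ^ 2))
        - a / (4 * (a ^ 2 - z ^ 2) ^ 2) * (4 * a / (m ^ 2 - a ^ 2)) := by
  rw [← neg_sub (m ^ 2) (a ^ 2)]
  field_simp
  ring

theorem hasSum_odd_sq_div_mul_sq {a z : ℂ} (ha : Complex.cos (π * a / 2) ≠ 0)
    (hz : Complex.cos (π * z / 2) ≠ 0) (hz0 : z ≠ 0) (haz : a ^ 2 - z ^ 2 ≠ 0) :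
    HasSum
      (fun n : ℕ => (1 + 2 * (n : ℂ)) ^ 2 /
        ((a ^ 2 - (1 + 2 * (n : ℂ)) ^ 2) * ((1 + 2 * (n : ℂ)) ^ 2 - z ^ 2) ^ 2))
      (1 / (8 * (a ^ 2 - z ^ 2)) * (π ^ 2 / 2 * (1 / Complex.cos (π * z / 2)) ^ 2)
        + (a ^ 2 + z ^ 2) / (8 * z * (a ^ 2 - z ^ 2) ^ 2) * (π * Complex.tan (π * z / 2))
        - a / (4 * (a ^ 2 - z ^ 2) ^ 2) * (π * Complex.tan (π * a / 2))) := by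
  have hsum_z := hasSumLocallyUniformlyOn_tanTerm.hasSum hz
  have hsum_a := hasSumLocallyUniformlyOn_tanTerm.hasSum ha
  refine ((((hasSum_odd_sq_add_sq_div_odd_sq_sub_sq_sq hz).mul_left _).add (hsum_z.mul_left _)).sub
    (hsum_a.mul_left _)).congr_fun fun n => ?_
  exact sq_div_mul_sq_partial_fractions hz0 haz
    (odd_sq_sub_sq_ne_zero_of_cos_ne_zero ha n) (odd_sq_sub_sq_ne_zero_of_cos_ne_zero hz n)

theorem stmt_7_general (k : ℤ) (z : ℂ) (hz : Complex.cos (π * z / 2) ≠ 0) (hz0 : z ≠ 0)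
    (hkz : 4 * (k : ℂ) ^ 2 - z ^ 2 ≠ 0) :
    HasSum
      (fun n : ℕ =>
        (1 + 2 * (n : ℂ)) ^ 2 /
          ((4 * (k : ℂ) ^ 2 - (1 + 2 * (n : ℂ)) ^ 2) *
            ((1 + 2 * (n : ℂ)) ^ 2 - z ^ 2) ^ 2))
      ((π ^ 2 * z / 2 * (4 * (k : ℂ) ^ 2 - z ^ 2) * (1 / Complex.cos (π * z / 2)) ^ 2
          + π * (4 * (k : ℂ) ^ 2 + z ^ 2) * Complex.tan (π * z / 2)) /
        (8 * z * (z ^ 2 - 4 * (k : ℂ) ^ 2) ^ 2)) := by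
  have hsq : (2 * (k : ℂ)) ^ 2 = 4 * (k : ℂ) ^ 2 := by ring
  have harg : π * (2 * (k : ℂ)) / 2 = k * π := by ring
  have hcos : Complex.cos (π * (2 * (k : ℂ)) / 2) ≠ 0 := by
    intro hcos
    have hpyth := Complex.sin_sq_add_cos_sq (k * π)
    rw [Complex.sin_int_mul_pi, ← harg, hcos] at hpyth
    norm_num at hpyth
  have htan : Complex.tan (π * (2 * (k : ℂ)) / 2) = 0 := by
    rw [harg, Complex.tan_int_mul_pi]
  have hsum := hasSum_odd_sq_div_mul_sq hcos hz hz0 (by rwa [hsq])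
  rw [htan] at hsum
  simp only [hsq] at hsum
  convert hsum using 1
  rw [← neg_sub (4 * (k : ℂ) ^ 2) (z ^ 2)]
  field_simp
  ring

/-- For every positive integer `k` and real `λ ∈ (0,1)`, the series
`∑_{n=0}^∞ (1+2n)²/((4k² − (1+2n)²)·((1+2n)² − λ²)²)` converges and equals
`((π²·λ/2)·(4k² − λ²)·sec²(πλ/2) + π·(4k² + λ²)·tan(πλ/2)) / (8·λ·(λ² − 4k²)²)`. -/
theorem stmt_7 (k : ℕ) (hk : 0 < k) (l : ℝ) (hl0 : 0 < l) (hl1 : l < 1) :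
    HasSum
      (fun n : ℕ =>
        (1 + 2 * (n : ℝ)) ^ 2 /
          ((4 * (k : ℝ) ^ 2 - (1 + 2 * (n : ℝ)) ^ 2) *
            ((1 + 2 * (n : ℝ)) ^ 2 - l ^ 2) ^ 2))
      ((π ^ 2 * l / 2 * (4 * (k : ℝ) ^ 2 - l ^ 2) * (1 / Real.cos (π * l / 2)) ^ 2
          + π * (4 * (k : ℝ) ^ 2 + l ^ 2) * Real.tan (π * l / 2)) /
        (8 * l * (l ^ 2 - 4 * (k : ℝ) ^ 2) ^ 2)) := by
  have hcos : Real.cos (π * l / 2) ≠ 0 :=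
    (Real.cos_pos_of_mem_Ioo ⟨by nlinarith [pi_pos], by nlinarith [pi_pos]⟩).ne'
  have hk1 : (1 : ℝ) ≤ k := mod_cast hk
  have hkl : 4 * (k : ℝ) ^ 2 - l ^ 2 ≠ 0 := by nlinarith
  exact_mod_cast stmt_7_general k l (mod_cast hcos) (mod_cast hl0.ne') (mod_cast hkl)
end

section
/- For every γ > 0, every λ₀ ∈ (0, π/(2γ)), and every y ∈ [−γ, γ], the two series below converge and satisfy ∑_{n=0}^∞ (2·(−1)^n·ω_n·cos(λ₀γ)/(γ·(ω_n² − λ₀²)²))·cos(ω_n·y) − ∑_{n=1}^∞ (2·(−1)^{n+1}·ω̄_n²·sin(λ₀γ)/(λ₀·γ·(ω̄_n² − λ₀²)²))·cos(ω̄_n·y) = C(λ₀)·cos(λ₀·y). In particular, the left-hand side, divided by cos(λ₀·y), is independent of y. -/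
open Real Set

open Complex (I)

/-!
If `g` takes equal values at `±γ` and solves `g' = i s g + b e^{itx}`, integrating by parts shows
that its Fourier coefficients on `[-γ, γ]` are proportional to `(-1)ⁿ / ((νₙ - s) (νₙ - t))` with
`νₙ = n π / γ`. They are summable, so the Fourier series converges to `g` on the closed interval.
The solution `cos (s x)`, with `t = -s`, sums `(-1)ⁿ cos (νₙ y) / (νₙ² - s²)`; the resonant solution
`(γ cos (s γ) - i x sin (s γ)) e^{isx}`, with `t = s`, sums `(-1)ⁿ e^{iνₙy} / (νₙ - s)²`.

By partial fractions both series of the theorem are these sums with `n` and its mirror image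
paired: `s = l - π / (2 γ)` turns `νₙ - s` into `ωₙ - l`, and `s = l` gives the integer frequencies.
The terms in `y sin (l y)` cancel in the difference.
-/

theorem neg_one_zpow_neg {α : Type*} [DivisionRing α] (n : ℤ) : (-1 : α) ^ (-n) = (-1) ^ n := by
  rw [zpow_neg, ← inv_zpow, inv_neg_one]

theorem hasDerivAt_cexp_mul_I (s : ℂ) (x : ℝ) :
    HasDerivAt (fun x : ℝ ↦ Complex.exp (s * x * I)) (s * I * Complex.exp (s * x * I)) x := by
  simpa [mul_comm, mul_left_comm] using
    (((hasDerivAt_id (x : ℂ)).const_mul s).mul_const I).cexp.comp_ofReal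

theorem hasSum_mul_cos_of_hasSum_mul_cexp {ι : Type*} {c μ : ι → ℂ} {x A B : ℂ}
    (hpos : HasSum (fun i ↦ c i * Complex.exp (μ i * x * I)) A)
    (hneg : HasSum (fun i ↦ c i * Complex.exp (μ i * -x * I)) B) :
    HasSum (fun i ↦ c i * Complex.cos (μ i * x)) ((A + B) / 2) := by
  refine ((hpos.add hneg).div_const 2).congr_fun fun i ↦ ?_
  rw [Complex.cos, mul_neg]
  ring

section FourierInterval

variable {a b : ℝ}

theorem hasSum_fourierCoeffOn_of_summable (hab : a < b) {f : ℝ → ℂ}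
    (hf : ContinuousOn f (Icc a b)) (hper : f a = f b) (hsum : Summable (fourierCoeffOn hab f))
    {x : ℝ} (hx : x ∈ Icc a b) :
    HasSum (fun n : ℤ ↦ fourierCoeffOn hab f n * fourier n (x : AddCircle (b - a))) (f x) := by
  have : Fact (0 < b - a) := ⟨sub_pos.2 hab⟩
  have hb : a + (b - a) = b := add_sub_cancel a b
  let F : C(AddCircle (b - a), ℂ) :=
    ⟨AddCircle.liftIoc (b - a) a f, AddCircle.liftIoc_continuous (by rwa [hb]) (by rwa [hb])⟩
  have hFx : F (x : AddCircle (b - a)) = f x := by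
    rcases hx.1.eq_or_lt with rfl | hlt
    · calc F (a : AddCircle (b - a)) = F (b : AddCircle (b - a)) := by
            rw [← AddCircle.coe_add_period (b - a) a, hb]
        _ = f b := AddCircle.liftIoc_coe_apply (by rw [hb]; exact ⟨hab, le_rfl⟩)
        _ = f a := hper.symm
    · exact AddCircle.liftIoc_coe_apply (by rw [hb]; exact ⟨hlt, hx.2⟩)
  exact hFx ▸ has_pointwise_sum_fourier_series_of_summable (f := F) hsum (x : AddCircle (b - a))

theorem mul_fourierCoeffOn_of_hasDerivAt_linear (hab : a < b) {c : ℂ} {g r : ℝ → ℂ}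
    (hg : ∀ x, HasDerivAt g (c * g x + r x) x) (hr : Continuous r) (n : ℤ) :
    (c - 2 * π * I * n / (b - a)) * fourierCoeffOn hab g n =
      fourier (-n) (a : AddCircle (b - a)) * (g b - g a) / (b - a) - fourierCoeffOn hab r n := by
  let e : ℝ → ℂ := fun x ↦ fourier (-n) (x : AddCircle (b - a))
  let d : ℂ := c - 2 * π * I * n / (b - a)
  have he (x : ℝ) : HasDerivAt e (-2 * π * I * n / (b - a) * e x) x :=
    mod_cast hasDerivAt_fourier_neg (b - a) n x
  have hcg : Continuous g := continuous_iff_continuousAt.2 fun x ↦ (hg x).continuousAt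
  have hce : Continuous e := continuous_iff_continuousAt.2 fun x ↦ (he x).continuousAt
  have heb : e b = e a := by
    simp only [e]
    rw [← AddCircle.coe_add_period (b - a) a, add_sub_cancel]
  have heg (x : ℝ) : HasDerivAt (fun x ↦ e x * g x) (d * (e x * g x) + e x * r x) x :=
    ((he x).mul (hg x)).congr_deriv (by simp only [d]; ring)
  have hftc : d * (∫ x in a..b, e x * g x) + ∫ x in a..b, e x * r x = e a * (g b - g a) := by
    rw [← intervalIntegral.integral_const_mul, ← intervalIntegral.integral_add
      (Continuous.intervalIntegrable (by fun_prop) _ _)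
      (Continuous.intervalIntegrable (by fun_prop) _ _),
      intervalIntegral.integral_eq_sub_of_hasDerivAt (fun x _ ↦ heg x)
        (Continuous.intervalIntegrable (by fun_prop) _ _), heb]
    ring
  simp only [fourierCoeffOn_eq_integral, smul_eq_mul, Complex.real_smul]
  push_cast
  linear_combination (1 / (b - a) : ℂ) * hftc

end FourierInterval

section SymmetricInterval

variable {γ : ℝ} {s t : ℂ}

theorem fourier_neg_apply_neg_half_period (hγ : γ ≠ 0) (n : ℤ) :
    fourier (-n) ((-γ : ℝ) : AddCircle (γ - -γ)) = (-1 : ℂ) ^ n := by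
  have : (γ : ℂ) ≠ 0 := mod_cast hγ
  rw [fourier_coe_apply, ← Complex.exp_pi_mul_I, ← Complex.exp_int_mul]
  congr 1
  push_cast
  field_simp
  ring

theorem sub_mul_fourierCoeffOn_cexp (hγ : 0 < γ) (s : ℂ) (n : ℤ) :
    (s - n * π / γ) * fourierCoeffOn (neg_lt_self hγ) (fun x ↦ Complex.exp (s * x * I)) n =
      (-1) ^ n * Complex.sin (s * γ) / γ := by
  have h := mul_fourierCoeffOn_of_hasDerivAt_linear (neg_lt_self hγ) (c := s * I) (r := 0)
    (fun x ↦ by simpa using hasDerivAt_cexp_mul_I s x) continuous_zero n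
  have hzero : fourierCoeffOn (neg_lt_self hγ) (0 : ℝ → ℂ) n = 0 := by
    simp [fourierCoeffOn_eq_integral]
  rw [fourier_neg_apply_neg_half_period hγ.ne', hzero, Complex.exp_mul_I, Complex.exp_mul_I] at h
  push_cast at h
  rw [mul_neg, Complex.cos_neg, Complex.sin_neg] at h
  refine mul_left_cancel₀ Complex.I_ne_zero ?_
  convert! h using 1 <;> field_simp <;> ring

theorem int_mul_pi_div_sub_ne_zero (hγ : γ ≠ 0) (hs : Complex.sin (s * γ) ≠ 0) (n : ℤ) :
    n * π / γ - s ≠ 0 := by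
  intro h
  have hγ' : (γ : ℂ) ≠ 0 := mod_cast hγ
  have hsγ : s * γ = n * π := by rw [← sub_eq_zero.1 h, div_mul_cancel₀ _ hγ']
  exact hs (hsγ ▸ Complex.sin_int_mul_pi n)

theorem int_mul_pi_div_add_ne_zero (hγ : γ ≠ 0) (hs : Complex.sin (s * γ) ≠ 0) (n : ℤ) :
    n * π / γ + s ≠ 0 := by
  simpa using int_mul_pi_div_sub_ne_zero (s := -s) hγ (by simpa using hs) n

theorem summable_inv_mul_int_mul_pi_div_sub (hγ : γ ≠ 0) (s t : ℂ) :
    Summable fun n : ℤ ↦ ((n * π / γ - s) * (n * π / γ - t))⁻¹ := by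
  have hγ' : (γ : ℂ) ≠ 0 := mod_cast hγ
  have hbigO := (EisensteinSeries.linear_inv_isBigO_right 1 (-(s * γ / π))).mul
    (EisensteinSeries.linear_inv_isBigO_right 1 (-(t * γ / π)))
  have hsum : Summable fun n : ℤ ↦ ((n - s * γ / π) * (n - t * γ / π))⁻¹ :=
    EisensteinSeries.summable_inv_of_isBigO_rpow_inv one_lt_two
      (by simpa [pow_two, mul_comm, neg_add_eq_sub] using hbigO)
  refine (hsum.mul_left ((γ / π) ^ 2 : ℂ)).congr fun n ↦ ?_
  rw [← inv_div, inv_pow, ← mul_inv]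
  congr 1
  field_simp

theorem fourierCoeffOn_of_hasDerivAt_of_periodic (hγ : 0 < γ) (hs : Complex.sin (s * γ) ≠ 0)
    (ht : Complex.sin (t * γ) ≠ 0) {b : ℂ} {g : ℝ → ℂ}
    (hg : ∀ x : ℝ, HasDerivAt g (s * I * g x + b * Complex.exp (t * x * I)) x)
    (hper : g (-γ) = g γ) (n : ℤ) :
    fourierCoeffOn (neg_lt_self hγ) g n =
      b * I * Complex.sin (t * γ) / γ * ((-1) ^ n / ((n * π / γ - s) * (n * π / γ - t))) := by
  have hns := int_mul_pi_div_sub_ne_zero hγ.ne' hs n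
  have hnt := int_mul_pi_div_sub_ne_zero hγ.ne' ht n
  have hforcing := sub_mul_fourierCoeffOn_cexp hγ t n
  have hlinear := mul_fourierCoeffOn_of_hasDerivAt_linear (neg_lt_self hγ) hg (by fun_prop) n
  have hfreq : 2 * π * I * n / (γ - (-γ : ℝ)) = n * π / γ * I := by
    push_cast
    field_simp
    ring
  rw [hfreq, hper, sub_self, mul_zero, zero_div, zero_sub, fourierCoeffOn.const_mul] at hlinear
  rw [← mul_div_assoc, eq_div_iff (mul_ne_zero hns hnt)]
  linear_combination I * (n * π / γ - t) * hlinear + b * I * hforcing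
    + (n * π / γ - t) * (n * π / γ - s) * fourierCoeffOn (neg_lt_self hγ) g n * Complex.I_sq

theorem hasSum_of_hasDerivAt_of_periodic (hγ : 0 < γ) (hs : Complex.sin (s * γ) ≠ 0)
    (ht : Complex.sin (t * γ) ≠ 0) {b : ℂ} (hb : b ≠ 0) {g : ℝ → ℂ}
    (hg : ∀ x : ℝ, HasDerivAt g (s * I * g x + b * Complex.exp (t * x * I)) x)
    (hper : g (-γ) = g γ) {y : ℝ} (hy : y ∈ Icc (-γ) γ) :
    HasSum (fun n : ℤ ↦
        (-1) ^ n / ((n * π / γ - s) * (n * π / γ - t)) * Complex.exp (n * π / γ * y * I))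
      (γ * g y / (b * I * Complex.sin (t * γ))) := by
  have hγ' : (γ : ℂ) ≠ 0 := mod_cast hγ.ne'
  have hcoeff := fourierCoeffOn_of_hasDerivAt_of_periodic hγ hs ht hg hper
  have hsum : Summable (fourierCoeffOn (neg_lt_self hγ) g) := by
    rw [funext hcoeff]
    refine Summable.mul_left _ (.of_norm ?_)
    simpa [div_eq_mul_inv] using (summable_inv_mul_int_mul_pi_div_sub hγ.ne' s t).norm
  have hcont : Continuous g := continuous_iff_continuousAt.2 fun x ↦ (hg x).continuousAt
  have hseries := hasSum_fourierCoeffOn_of_summable (neg_lt_self hγ) hcont.continuousOn hper hsum hy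
  have hfourier (n : ℤ) :
      fourier n (y : AddCircle (γ - -γ)) = Complex.exp (n * π / γ * y * I) := by
    rw [fourier_coe_apply]
    congr 1
    push_cast
    field_simp
    ring
  have hfactor : b * I * Complex.sin (t * γ) ≠ 0 :=
    mul_ne_zero (mul_ne_zero hb Complex.I_ne_zero) ht
  convert! hseries.mul_left (γ / (b * I * Complex.sin (t * γ))) using 1
  · funext n
    rw [hcoeff, hfourier]
    generalize b * I * Complex.sin (t * γ) = B at hfactor ⊢
    field_simp
  · ring

theorem hasSum_cos_div_sq_sub_sq (hγ : 0 < γ) (hs : Complex.sin (s * γ) ≠ 0) {y : ℝ}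
    (hy : y ∈ Icc (-γ) γ) :
    HasSum (fun n : ℤ ↦ (-1) ^ n / ((n * π / γ) ^ 2 - s ^ 2) * Complex.cos (n * π / γ * y))
      (-(γ * Complex.cos (s * y)) / (s * Complex.sin (s * γ))) := by
  have hs0 : s ≠ 0 := by rintro rfl; simp at hs
  have hderiv (x : ℝ) : HasDerivAt (fun x : ℝ ↦ Complex.cos (s * x))
      (s * I * Complex.cos (s * x) + -(s * I) * Complex.exp (-s * x * I)) x := by
    refine ((hasDerivAt_id (x : ℂ)).const_mul s).ccos.comp_ofReal.congr_deriv ?_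
    rw [Complex.exp_mul_I, neg_mul s, Complex.cos_neg, Complex.sin_neg]
    simp only [id_eq]
    linear_combination - s * Complex.sin (s * x) * Complex.I_sq
  have hexp {x : ℝ} (hx : x ∈ Icc (-γ) γ) :=
    hasSum_of_hasDerivAt_of_periodic hγ hs (by simpa using hs)
      (neg_ne_zero.2 (mul_ne_zero hs0 Complex.I_ne_zero)) hderiv (by simp) hx
  have hneg : -y ∈ Icc (-γ) γ := ⟨neg_le_neg hy.2, neg_le.1 hy.1⟩
  convert! hasSum_mul_cos_of_hasSum_mul_cexp (hexp hy)
    (by simpa only [Complex.ofReal_neg] using hexp hneg) using 1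
  · funext n
    ring
  · simp only [mul_neg, neg_mul, Complex.cos_neg, Complex.sin_neg]
    field_simp
    rw [Complex.I_sq]
    ring

theorem hasSum_cexp_div_sub_sq (hγ : 0 < γ) (hs : Complex.sin (s * γ) ≠ 0) {y : ℝ}
    (hy : y ∈ Icc (-γ) γ) :
    HasSum (fun n : ℤ ↦ (-1) ^ n / (n * π / γ - s) ^ 2 * Complex.exp (n * π / γ * y * I))
      (γ * (γ * Complex.cos (s * γ) - y * Complex.sin (s * γ) * I) * Complex.exp (s * y * I) /
        Complex.sin (s * γ) ^ 2) := by
  let g : ℝ → ℂ := fun x ↦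
    (γ * Complex.cos (s * γ) - x * Complex.sin (s * γ) * I) * Complex.exp (s * x * I)
  have hderiv (x : ℝ) : HasDerivAt g
      (s * I * g x + -(Complex.sin (s * γ) * I) * Complex.exp (s * x * I)) x := by
    have hlin : HasDerivAt (fun x : ℝ ↦ γ * Complex.cos (s * γ) - x * Complex.sin (s * γ) * I)
        (-(Complex.sin (s * γ) * I)) x := by
      simpa using ((((hasDerivAt_id (x : ℂ)).mul_const (Complex.sin (s * γ))).mul_const
        I).const_sub (γ * Complex.cos (s * γ))).comp_ofReal
    exact (hlin.mul (hasDerivAt_cexp_mul_I s x)).congr_deriv (by ring)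
  have hper : g (-γ) = g γ := by
    simp only [g, Complex.exp_mul_I, Complex.ofReal_neg, mul_neg, Complex.cos_neg,
      Complex.sin_neg]
    ring
  convert! hasSum_of_hasDerivAt_of_periodic hγ hs hs
    (neg_ne_zero.2 (mul_ne_zero hs Complex.I_ne_zero)) hderiv hper hy using 1
  · simp only [sq]
  · simp only [g]
    field_simp
    rw [Complex.I_sq]
    ring

theorem hasSum_cos_div_sub_sq (hγ : 0 < γ) (hs : Complex.sin (s * γ) ≠ 0) (l : ℂ) {y : ℝ}
    (hy : y ∈ Icc (-γ) γ) :
    HasSum (fun n : ℤ ↦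
        (-1) ^ n / (n * π / γ - s) ^ 2 * Complex.cos ((n * π / γ - s + l) * y))
      (γ * (γ * Complex.cos (s * γ) * Complex.cos (l * y) +
        y * Complex.sin (s * γ) * Complex.sin (l * y)) / Complex.sin (s * γ) ^ 2) := by
  have hshift {x : ℝ} (hx : x ∈ Icc (-γ) γ) : HasSum (fun n : ℤ ↦
      (-1) ^ n / (n * π / γ - s) ^ 2 * Complex.exp ((n * π / γ - s + l) * x * I))
      (γ * (γ * Complex.cos (s * γ) - x * Complex.sin (s * γ) * I) * Complex.exp (l * x * I) /
        Complex.sin (s * γ) ^ 2) := by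
    convert! (hasSum_cexp_div_sub_sq hγ hs hx).mul_left (Complex.exp ((l - s) * x * I)) using 1
    · funext n
      rw [mul_left_comm, ← Complex.exp_add]
      ring_nf
    · rw [← mul_div_assoc, mul_left_comm, ← Complex.exp_add]
      ring_nf
  have hneg : -y ∈ Icc (-γ) γ := ⟨neg_le_neg hy.2, neg_le.1 hy.1⟩
  convert! hasSum_mul_cos_of_hasSum_mul_cexp (hshift hy)
    (by simpa only [Complex.ofReal_neg] using hshift hneg) using 1
  simp only [Complex.exp_mul_I, mul_neg, Complex.cos_neg, Complex.sin_neg]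
  linear_combination γ * y * Complex.sin (s * γ) * Complex.sin (l * y) /
    Complex.sin (s * γ) ^ 2 * Complex.I_sq

theorem hasSum_cos_nat_add_half_mul_pi_div (hγ : 0 < γ) {l : ℂ} (hl : l ≠ 0)
    (hcos : Complex.cos (l * γ) ≠ 0) {y : ℝ} (hy : y ∈ Icc (-γ) γ) :
    HasSum (fun n : ℕ ↦ 2 * (-1) ^ n * ((n + 1 / 2) * π / γ) * Complex.cos (l * γ) /
        (γ * (((n + 1 / 2) * π / γ) ^ 2 - l ^ 2) ^ 2) * Complex.cos ((n + 1 / 2) * π / γ * y))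
      ((γ * Complex.sin (l * γ) * Complex.cos (l * y) -
        y * Complex.cos (l * γ) * Complex.sin (l * y)) / (2 * l * Complex.cos (l * γ))) := by
  have hγ' : (γ : ℂ) ≠ 0 := mod_cast hγ.ne'
  let s : ℂ := l - π / (2 * γ)
  have hsγ : s * γ = l * γ - π / 2 := by simp only [s]; field_simp
  have hsin : Complex.sin (s * γ) = -Complex.cos (l * γ) := by
    rw [hsγ, Complex.sin_sub_pi_div_two]
  have hs : Complex.sin (s * γ) ≠ 0 := by rwa [hsin, neg_ne_zero]
  have hseries := (hasSum_cos_div_sub_sq hγ hs l hy).nat_add_neg_add_one.mul_left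
    (Complex.cos (l * γ) / (2 * l * γ))
  convert! hseries using 1
  · funext n
    have hpos := int_mul_pi_div_sub_ne_zero hγ.ne' hs n
    have hneg := int_mul_pi_div_sub_ne_zero hγ.ne' hs (-(n + 1))
    have hω : ((n : ℤ) : ℂ) * π / γ - s = (n + 1 / 2) * π / γ - l := by
      simp only [s, Int.cast_natCast]; field_simp; ring
    have hω' : ((-(n + 1) : ℤ) : ℂ) * π / γ - s = -((n + 1 / 2) * π / γ + l) := by
      simp only [s]; push_cast; field_simp; ring
    rw [hω] at hpos ⊢
    rw [hω'] at hneg ⊢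
    generalize (n + 1 / 2) * (π : ℂ) / γ = ω at *
    have hsign : (-1 : ℂ) ^ (-(n + 1) : ℤ) = -(-1) ^ n := by
      rw [neg_one_zpow_neg, zpow_add_one₀ (by norm_num), zpow_natCast]
      ring
    have hcos_neg : Complex.cos ((-(ω + l) + l) * y) = Complex.cos (ω * y) := by
      rw [← Complex.cos_neg]
      ring_nf
    rw [neg_ne_zero] at hneg
    rw [hsign, hcos_neg, sub_add_cancel, zpow_natCast, sq_sub_sq]
    field_simp
    ring
  · rw [hsin, hsγ, Complex.cos_sub_pi_div_two]
    field_simp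
    ring

theorem hasSum_mul_cos_div_sub_sq_mul_add (hγ : 0 < γ) (hs : Complex.sin (s * γ) ≠ 0) {y : ℝ}
    (hy : y ∈ Icc (-γ) γ) :
    HasSum (fun n : ℤ ↦ (-1) ^ n * (2 * (n * π / γ)) /
        ((n * π / γ - s) ^ 2 * (n * π / γ + s)) * Complex.cos (n * π / γ * y))
      (γ * (γ * Complex.cos (s * γ) * Complex.cos (s * y) +
          y * Complex.sin (s * γ) * Complex.sin (s * y)) / Complex.sin (s * γ) ^ 2 +
        -(γ * Complex.cos (s * y)) / (s * Complex.sin (s * γ))) := by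
  refine ((hasSum_cos_div_sub_sq hγ hs s hy).add
    (hasSum_cos_div_sq_sub_sq hγ hs hy)).congr_fun fun n ↦ ?_
  have hsub := int_mul_pi_div_sub_ne_zero hγ.ne' hs n
  have hadd := int_mul_pi_div_add_ne_zero hγ.ne' hs n
  simp only [sub_add_cancel, sq_sub_sq (_ / _)]
  generalize n * (π : ℂ) / γ = ν at *
  field_simp
  ring

theorem hasSum_cos_nat_mul_pi_div (hγ : 0 < γ) {l : ℂ} (hsin : Complex.sin (l * γ) ≠ 0)
    {y : ℝ} (hy : y ∈ Icc (-γ) γ) :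
    HasSum (fun n : ℕ ↦ 2 * (-1) ^ (n + 1 + 1) * (((n + 1 : ℕ) : ℂ) * π / γ) ^ 2 *
        Complex.sin (l * γ) / (l * γ * ((((n + 1 : ℕ) : ℂ) * π / γ) ^ 2 - l ^ 2) ^ 2) *
        Complex.cos (((n + 1 : ℕ) : ℂ) * π / γ * y))
      ((Complex.cos (l * y) / l - (γ * Complex.cos (l * γ) * Complex.cos (l * y) +
        y * Complex.sin (l * γ) * Complex.sin (l * y)) / Complex.sin (l * γ)) / (2 * l)) := by
  have hγ' : (γ : ℂ) ≠ 0 := mod_cast hγ.ne'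
  have hl : l ≠ 0 := by rintro rfl; simp at hsin
  have hfold := (hasSum_nat_add_iff' 1).2
    (hasSum_mul_cos_div_sub_sq_mul_add hγ hsin hy).nat_add_neg
  simp only [Finset.sum_range_one, Nat.cast_zero, neg_zero, Int.cast_zero, zero_mul, zero_div,
    mul_zero, add_zero, sub_zero] at hfold
  convert! hfold.mul_left (-Complex.sin (l * γ) / (2 * l * γ)) using 1
  · funext n
    have hsub := int_mul_pi_div_sub_ne_zero hγ.ne' hsin (n + 1 : ℕ)
    have hadd := int_mul_pi_div_add_ne_zero hγ.ne' hsin (n + 1 : ℕ)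
    simp only [neg_one_zpow_neg, zpow_natCast, Int.cast_neg, neg_mul, neg_div,
      Complex.cos_neg, Int.cast_natCast, sq_sub_sq] at hsub hadd ⊢
    generalize ((n + 1 : ℕ) : ℂ) * π / γ = ν at *
    rw [← neg_add', neg_add_eq_sub, ← neg_sub ν l]
    field_simp
    ring
  · field_simp
    ring

end SymmetricInterval

theorem stmt_8_general (γ : ℝ) (hγ : 0 < γ) (l : ℂ) (hsin : Complex.sin (l * γ) ≠ 0)
    (hcos : Complex.cos (l * γ) ≠ 0) (y : ℝ) (hy : y ∈ Icc (-γ) γ)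
    (ω ωb : ℕ → ℝ)
    (hω : ∀ n : ℕ, ω n = ((n : ℝ) + 1 / 2) * π / γ)
    (hωb : ∀ n : ℕ, ωb n = (n : ℝ) * π / γ)
    (C : ℂ)
    (hC : C = (1 / 2) * (γ / (l * Complex.sin (l * γ) * Complex.cos (l * γ)) - 1 / l ^ 2)) :
    ∃ S₁ S₂ : ℂ,
      HasSum (fun n : ℕ ↦
          2 * (-1) ^ n * ω n * Complex.cos (l * γ) / (γ * (ω n ^ 2 - l ^ 2) ^ 2)
            * Complex.cos (ω n * y)) S₁ ∧
      HasSum (fun n : ℕ ↦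
          2 * (-1) ^ (n + 1 + 1) * ωb (n + 1) ^ 2 * Complex.sin (l * γ)
              / (l * γ * (ωb (n + 1) ^ 2 - l ^ 2) ^ 2)
            * Complex.cos (ωb (n + 1) * y)) S₂ ∧
      S₁ - S₂ = C * Complex.cos (l * y) := by
  have hl : l ≠ 0 := by rintro rfl; simp at hsin
  refine ⟨_, _, by simpa [hω] using hasSum_cos_nat_add_half_mul_pi_div hγ hl hcos hy,
    by simpa [hωb] using hasSum_cos_nat_mul_pi_div hγ hsin hy, ?_⟩
  have hpythagoras := Complex.sin_sq_add_cos_sq (l * γ)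
  rw [hC]
  generalize Complex.sin (l * γ) = σ at *
  generalize Complex.cos (l * γ) = κ at *
  field_simp
  linear_combination γ * l * Complex.cos (l * y) * hpythagoras

theorem mul_mem_Ioo_zero_pi_div_two {γ l : ℝ} (hγ : 0 < γ) (hl : l ∈ Ioo 0 (π / (2 * γ))) :
    l * γ ∈ Ioo 0 (π / 2) :=
  ⟨mul_pos hl.1 hγ, (lt_div_iff₀ hγ).1 (by simpa only [div_div] using hl.2)⟩

/-- For `γ > 0`, `λ₀ ∈ (0, π/(2γ))` and `y ∈ [−γ, γ]`, with
`ω_n = (n + 1/2)·π/γ`, `ω̄_n = n·π/γ` and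
`C(λ₀) = (1/2)·(γ/(λ₀·sin(λ₀γ)·cos(λ₀γ)) − 1/λ₀²)`, the two series
`∑_{n=0}^∞ (2·(−1)^n·ω_n·cos(λ₀γ)/(γ·(ω_n² − λ₀²)²))·cos(ω_n·y)` and
`∑_{n=1}^∞ (2·(−1)^{n+1}·ω̄_n²·sin(λ₀γ)/(λ₀·γ·(ω̄_n² − λ₀²)²))·cos(ω̄_n·y)`
converge, and their difference equals `C(λ₀)·cos(λ₀·y)`. -/
theorem stmt_8 (γ : ℝ) (hγ : 0 < γ) (l : ℝ) (hl : l ∈ Ioo 0 (π / (2 * γ)))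
    (y : ℝ) (hy : y ∈ Icc (-γ) γ)
    (ω ωb : ℕ → ℝ)
    (hω : ∀ n : ℕ, ω n = ((n : ℝ) + 1/2) * π / γ)
    (hωb : ∀ n : ℕ, ωb n = (n : ℝ) * π / γ)
    (C : ℝ)
    (hC : C = (1/2) * (γ / (l * Real.sin (l * γ) * Real.cos (l * γ)) - 1 / l ^ 2)) :
    ∃ S₁ S₂ : ℝ,
      HasSum (fun n : ℕ =>
          2 * (-1 : ℝ) ^ n * ω n * Real.cos (l * γ) / (γ * (ω n ^ 2 - l ^ 2) ^ 2)
            * Real.cos (ω n * y)) S₁ ∧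
      HasSum (fun n : ℕ =>
          2 * (-1 : ℝ) ^ (n + 1 + 1) * ωb (n + 1) ^ 2 * Real.sin (l * γ)
              / (l * γ * (ωb (n + 1) ^ 2 - l ^ 2) ^ 2)
            * Real.cos (ωb (n + 1) * y)) S₂ ∧
      S₁ - S₂ = C * Real.cos (l * y) := by
  have hlγ := mul_mem_Ioo_zero_pi_div_two hγ hl
  have hsin : Complex.sin (l * γ) ≠ 0 :=
    mod_cast (Real.sin_pos_of_pos_of_lt_pi hlγ.1 (by linarith [hlγ.1, hlγ.2])).ne'
  have hcos : Complex.cos (l * γ) ≠ 0 :=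
    mod_cast (Real.cos_pos_of_mem_Ioo ⟨by linarith [hlγ.1, hlγ.2], hlγ.2⟩).ne'
  obtain ⟨S₁, S₂, hS₁, hS₂, hdiff⟩ :=
    stmt_8_general γ hγ l hsin hcos y hy ω ωb hω hωb C (by rw [hC]; push_cast; rfl)
  exact ⟨S₁.re, S₂.re, mod_cast Complex.hasSum_re hS₁, mod_cast Complex.hasSum_re hS₂,
    mod_cast congrArg Complex.re hdiff⟩
end
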